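/- arXiv:2308.10499 — 15 statements merged into one kernel-verified Lean document; each statement's English description precedes it below -/
import Mathlib

section
/- Let π, π' be permutations of [d] and let x ≠ y be elements of [d] with x <_π y but y <_{π'} x. Let π'' be the permutation obtained from π' by exchanging the positions of x and y (i.e., π'' agrees with π' everywhere except that x is placed at the position of y and y at the position of x). Then K(π, π'') < K(π, π'), i.e., the Kendall tau distance to π strictly decreases. -/
/-!
Write `s` for the transposition of `x` and `y`. Let `A` be the set of pairs counted by
`kendall π π''`, where `π'' = π'.trans s`, and `B` the set counted by `kendall π π'`. A pair
`(a, b)` in `A \ B` must involve exactly one of `x`, `y` together with a third candidate `c`, and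
`c` must lie strictly between `y` and `x` in `π'`; the only possibilities are `(c, x)` and
`(y, c)`. Applying `s` to both entries turns these into `(c, y)` and `(x, c)`, which lie in
`B \ A`. So `s` injects `A \ B` into `B \ A`, and it misses `(x, y) ∈ B \ A`, whose only preimage
`(y, x)` is ordered the wrong way by `π`. Hence `#(A \ B) < #(B \ A)`, i.e. `#A < #B`.
-/

/-- Kendall tau distance between two rankings of `[d]`: the number of pairs `(a,b)` such
that `a` appears before `b` in `π₁` but `b` appears before `a` in `π₂`. A ranking `π` is a
permutation of `Fin d`, with `π i` the candidate in position `i`, so `a` appears before `b`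
in `π` iff `π.symm a < π.symm b`. -/
def kendall {d : ℕ} (π₁ π₂ : Equiv.Perm (Fin d)) : ℕ :=
  (Finset.univ.filter fun p : Fin d × Fin d =>
    π₁.symm p.1 < π₁.symm p.2 ∧ π₂.symm p.2 < π₂.symm p.1).card

/-- If `x` appears before `y` in `π` but `y` appears before `x` in `π'`, then exchanging the
positions of `x` and `y` in `π'` (i.e. passing to `π'.trans (Equiv.swap x y)`) strictly
decreases the Kendall tau distance to `π`. -/
theorem swap_decreases_kendall {d : ℕ} (π π' : Equiv.Perm (Fin d)) (x y : Fin d)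
    (hxy : x ≠ y) (h₁ : π.symm x < π.symm y) (h₂ : π'.symm y < π'.symm x) :
    kendall π (π'.trans (Equiv.swap x y)) < kendall π π' := by
  unfold kendall
  have hinj : Function.Injective (Prod.map (Equiv.swap x y) (Equiv.swap x y)) :=
    (Equiv.injective _).prodMap (Equiv.injective _)
  rw [← Finset.card_sdiff_lt_card_sdiff_iff, ← Finset.card_image_of_injective _ hinj]
  apply Finset.card_lt_card
  rw [Finset.ssubset_iff_of_subset]
  · refine ⟨(x, y), ?_, ?_⟩
    · simp only [Finset.mem_sdiff, Finset.mem_filter, Finset.mem_univ, true_and]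
      simp [h₁, h₂, h₂.le]
    · simp only [Finset.mem_image, Finset.mem_sdiff, Finset.mem_filter, Finset.mem_univ,
        true_and, Prod.exists, Prod.map_apply, Prod.mk.injEq, not_exists]
      rintro a b ⟨⟨⟨hab, -⟩, -⟩, ha, hb⟩
      rw [Equiv.swap_apply_eq_iff, Equiv.swap_apply_left] at ha
      rw [Equiv.swap_apply_eq_iff, Equiv.swap_apply_right] at hb
      subst ha hb
      exact lt_asymm h₁ hab
  · simp only [Finset.subset_iff, Finset.mem_image, Finset.mem_sdiff, Finset.mem_filter,
      Finset.mem_univ, true_and, Prod.exists, Prod.map_apply]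
    rintro _ ⟨a, b, ⟨⟨hab, hs⟩, hn⟩, rfl⟩
    -- `(a, b)` is ordered correctly by `π`, so being outside `B` means `π'` does not reverse it.
    replace hn : π'.symm a ≤ π'.symm b := not_lt.mp fun h => hn ⟨hab, h⟩
    simp only [Equiv.symm_trans_apply, Equiv.symm_swap, Equiv.swap_apply_self]
    simp only [Equiv.symm_trans_apply, Equiv.symm_swap, Equiv.swap_apply_def] at hs ⊢
    grind
end

section
/- Let π be a ranking of [d], let G₁,…,G_g be a partition of [d] into groups, and let ᾱ, β̄ ∈ [0,1]^g and k ∈ [d] be such that at least one (ᾱ,β̄)-k-fair ranking exists. Then there exists a ranking π* that is (ᾱ,β̄)-k-fair, minimizes the Kendall tau distance K(π,·) over all (ᾱ,β̄)-k-fair rankings, and preserves intra-group orderings: for each group G_i and any two elements a ≠ b ∈ G_i, a <_{π*} b if and only if a <_π b. -/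
/-- Number of elements of the group `G` among the first `ℓ` positions of the ranking `σ`. -/
def prefCount {d : ℕ} (σ : Equiv.Perm (Fin d)) (G : Finset (Fin d)) (ℓ : ℕ) : ℕ :=
  (Finset.univ.filter fun i : Fin d => i.val < ℓ ∧ σ i ∈ G).card

/-- `(ᾱ,β̄)`-`k`-fair ranking. -/
def KFair {d g : ℕ} (σ : Equiv.Perm (Fin d)) (G : Fin g → Finset (Fin d))
    (α β : Fin g → ℝ) (k : ℕ) : Prop :=
  ∀ i : Fin g, ⌊α i * (k : ℝ)⌋₊ ≤ prefCount σ (G i) k ∧ prefCount σ (G i) k ≤ ⌈β i * (k : ℝ)⌉₊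

/-- Exchanging two candidates that are both in `S` or both outside `S` does not change how many
elements of `S` are in a prefix. -/
lemma prefCount_swap {d : ℕ} (σ : Equiv.Perm (Fin d)) (S : Finset (Fin d)) (l : ℕ) (a b : Fin d)
    (h : a ∈ S ↔ b ∈ S) : prefCount (Equiv.swap a b * σ) S l = prefCount σ S l := by
  have hmem : ∀ x, Equiv.swap a b x ∈ S ↔ x ∈ S := by
    intro x
    rw [Equiv.swap_apply_def]
    split_ifs with h1 h2
    · rw [h1, h]
    · rw [h2, h]
    · rfl
  exact congrArg Finset.card (Finset.filter_congr fun i _ => and_congr_right fun _ => hmem (σ i))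

/-- Repairing an inverted pair strictly decreases the Kendall tau distance: relabelling by the
transposition `(a b)` injects the newly created inversions into the removed ones, and the removed
inversion `(a, b)` is not hit. -/
lemma kendall_swap_lt {d : ℕ} (π σ : Equiv.Perm (Fin d)) (a b : Fin d)
    (hab : π.symm a < π.symm b) (hba : σ.symm b < σ.symm a) :
    kendall π (Equiv.swap a b * σ) < kendall π σ := by
  have hs : ∀ x, (Equiv.swap a b * σ).symm x = σ.symm (Equiv.swap a b x) := fun x => rfl
  have hne : a ≠ b := by rintro rfl; exact lt_irrefl _ hab
  unfold kendall
  simp only [hs]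
  set A := Finset.univ.filter fun p : Fin d × Fin d =>
    π.symm p.1 < π.symm p.2 ∧ σ.symm (Equiv.swap a b p.2) < σ.symm (Equiv.swap a b p.1) with hA
  set B := Finset.univ.filter fun p : Fin d × Fin d =>
    π.symm p.1 < π.symm p.2 ∧ σ.symm p.2 < σ.symm p.1 with hB
  have habmem : (a, b) ∈ B \ A := by
    simp only [hA, hB, Finset.mem_sdiff, Finset.mem_filter, Finset.mem_univ, true_and,
      Equiv.swap_apply_left, Equiv.swap_apply_right]
    exact ⟨⟨hab, hba⟩, fun h => lt_asymm h.2 hba⟩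
  have hle : (A \ B).card ≤ ((B \ A).erase (a, b)).card := by
    refine Finset.card_le_card_of_injOn
      (fun p => (Equiv.swap a b p.1, Equiv.swap a b p.2)) ?_ ?_
    · rintro ⟨x, y⟩ hxy
      simp only [hA, hB, Finset.coe_sdiff, Set.mem_sdiff, Finset.mem_coe, Finset.mem_filter,
        Finset.mem_univ, true_and, not_and, Finset.coe_erase,
        Set.mem_singleton_iff, Prod.mk.injEq, Equiv.swap_apply_self] at hxy ⊢
      obtain ⟨⟨h1, h2⟩, h3⟩ := hxy
      have h3 := h3 h1
      refine ⟨⟨⟨?_, h2⟩, fun _ => h3⟩, ?_⟩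
      · -- Pairs avoiding `a` and `b` are fixed. Otherwise, for a third candidate `c`, the cases
        -- `(c, a) ↦ (c, b)` and `(b, c) ↦ (a, c)` stay ordered because `a <_π b`, while `(c, b)`,
        -- `(a, c)`, `(a, b)` and `(b, a)` are not new inversions.
        simp only [Equiv.swap_apply_def] at h2 ⊢
        split_ifs at h2 ⊢ <;> subst_vars <;> omega
      · intro hx hy
        rw [Equiv.swap_apply_eq_iff, Equiv.swap_apply_left] at hx
        rw [Equiv.swap_apply_eq_iff, Equiv.swap_apply_right] at hy
        rw [hx, hy] at h1
        exact lt_asymm h1 hab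
    · rintro ⟨x, y⟩ - ⟨x', y'⟩ - h
      simpa using h
  have h1 := Finset.card_erase_lt_of_mem habmem
  have h2 := Finset.card_sdiff_add_card_inter A B
  have h3 := Finset.card_sdiff_add_card_inter B A
  rw [Finset.inter_comm] at h3
  omega

/-- If some `(ᾱ,β̄)`-`k`-fair ranking exists, then there is a closest (w.r.t. Kendall tau
distance to `π`) `(ᾱ,β̄)`-`k`-fair ranking that moreover preserves the intra-group
orderings of `π`. -/
theorem exists_closest_kfair_preserving_intragroup {d g : ℕ} (π : Equiv.Perm (Fin d))
    (G : Fin g → Finset (Fin d)) (hpart : ∀ a : Fin d, ∃! i : Fin g, a ∈ G i)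
    (α β : Fin g → ℝ) (hα : ∀ i, 0 ≤ α i ∧ α i ≤ 1) (hβ : ∀ i, 0 ≤ β i ∧ β i ≤ 1)
    (k : ℕ) (hk : 1 ≤ k ∧ k ≤ d)
    (hex : ∃ σ : Equiv.Perm (Fin d), KFair σ G α β k) :
    ∃ πs : Equiv.Perm (Fin d), KFair πs G α β k ∧
      (∀ σ : Equiv.Perm (Fin d), KFair σ G α β k → kendall π πs ≤ kendall π σ) ∧
      (∀ i : Fin g, ∀ a ∈ G i, ∀ b ∈ G i, a ≠ b →
        (πs.symm a < πs.symm b ↔ π.symm a < π.symm b)) := by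
  classical
  obtain ⟨σ, hσ, hmin⟩ := Finset.exists_min_image
    (Finset.univ.filter fun σ : Equiv.Perm (Fin d) => KFair σ G α β k) (kendall π)
    (by obtain ⟨σ, hσ⟩ := hex; exact ⟨σ, by simpa using hσ⟩)
  simp only [Finset.mem_filter, Finset.mem_univ, true_and] at hσ hmin
  have key : ∀ i, ∀ a ∈ G i, ∀ b ∈ G i, π.symm a < π.symm b → ¬ σ.symm b < σ.symm a := by
    intro i a ha b hb hab hba
    refine absurd (hmin (Equiv.swap a b * σ) fun j => ?_)
      (not_le.mpr (kendall_swap_lt π σ a b hab hba))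
    have hj : a ∈ G j ↔ b ∈ G j :=
      ⟨fun h => (hpart a).unique h ha ▸ hb, fun h => (hpart b).unique h hb ▸ ha⟩
    rw [prefCount_swap σ (G j) k a b hj]
    exact hσ j
  refine ⟨σ, hσ, hmin, fun i a ha b hb hne => ?_⟩
  have e1 : σ.symm a ≠ σ.symm b := fun h => hne (σ.symm.injective h)
  have e2 : π.symm a ≠ π.symm b := fun h => hne (π.symm.injective h)
  have k1 := key i a ha b hb
  have k2 := key i b hb a ha
  constructor <;> intro h
  · exact e2.lt_or_gt.resolve_right fun h' => k2 h' h
  · exact e1.lt_or_gt.resolve_right (k1 h)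
end

section
/- Let π be a ranking of [d], let G₁,…,G_g be a partition of [d], ᾱ, β̄ ∈ [0,1]^g, k ∈ [d], and suppose at least one (ᾱ,β̄)-k-fair ranking exists. Let σ be any (ᾱ,β̄)-k-fair ranking minimizing the Kendall tau distance K(π,·) over all (ᾱ,β̄)-k-fair rankings. Then σ orders its prefix and its suffix according to π: for all positions 1 ≤ i < j ≤ k one has σ(i) <_π σ(j), and for all positions k < i < j ≤ d one has σ(i) <_π σ(j). -/
theorem prefCount_mul_swap {d : ℕ} (σ : Equiv.Perm (Fin d)) (H : Finset (Fin d)) (k : ℕ)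
    (p q : Fin d) (hpq : p.val < k ↔ q.val < k) :
    prefCount (σ * Equiv.swap p q) H k = prefCount σ H k := by
  unfold prefCount
  have hside (i : Fin d) : (Equiv.swap p q i).val < k ↔ i.val < k := by
    rw [Equiv.swap_apply_def]
    split_ifs <;> simp_all
  refine Finset.card_bij (fun i _ => Equiv.swap p q i) ?_ ?_ ?_
  · intro i hi
    rw [Finset.mem_filter] at hi ⊢
    simpa [hside] using hi
  · intro i _ j _ h
    exact (Equiv.swap p q).injective h
  · intro i hi
    exact ⟨Equiv.swap p q i, by rw [Finset.mem_filter] at hi ⊢; simpa [hside] using hi, by simp⟩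

/-- Exchanging two adjacent candidates that `π` orders the other way strictly decreases the
distance to `π`. -/
theorem kendall_mul_swap_lt {d : ℕ} (π σ : Equiv.Perm (Fin d)) (p q : Fin d)
    (hpq : q.val = p.val + 1) (h : π.symm (σ q) < π.symm (σ p)) :
    kendall π (σ * Equiv.swap p q) < kendall π σ := by
  have hsymm (x : Fin d) : (σ * Equiv.swap p q).symm x = Equiv.swap p q (σ.symm x) := rfl
  have hlt : p < q := by rw [Fin.lt_def]; omega
  unfold kendall
  apply Finset.card_lt_card
  rw [Finset.ssubset_iff_of_subset]
  · refine ⟨(σ q, σ p), ?_, ?_⟩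
    · simpa using ⟨h, hlt⟩
    · simp [hsymm, hlt.le]
  · rintro ⟨a, b⟩ hab
    simp only [Finset.mem_filter, Finset.mem_univ, true_and, hsymm] at hab ⊢
    refine ⟨hab.1, ?_⟩
    obtain ⟨i, rfl⟩ := σ.surjective a
    obtain ⟨j, rfl⟩ := σ.surjective b
    simp only [Equiv.symm_apply_apply] at hab ⊢
    obtain ⟨h1, h2⟩ := hab
    -- The only pair of positions whose order the exchange reverses is `{p, q}`.
    by_cases hij : i = p ∧ j = q
    · obtain ⟨rfl, rfl⟩ := hij
      exact absurd h1 h.asymm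
    · rw [Equiv.swap_apply_def, Equiv.swap_apply_def] at h2
      simp only [Fin.lt_def, Fin.ext_iff] at *
      split_ifs at h2 <;> omega

/-- If consecutive positions of the block `[p, q]` are ordered according to `f`, so are `p`
and `q`. -/
theorem lt_of_consecutive_lt {d : ℕ} (f : Fin d → Fin d) (p q : Fin d) (hpq : p < q)
    (h : ∀ i j : Fin d, p ≤ i → j ≤ q → j.val = i.val + 1 → f i < f j) : f p < f q := by
  obtain ⟨n, hn⟩ : ∃ n, q.val = p.val + n + 1 := ⟨q.val - p.val - 1, by
    rw [Fin.lt_def] at hpq; omega⟩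
  induction n generalizing q with
  | zero => exact h p q le_rfl le_rfl hn
  | succ n ih =>
    have hr : p.val + n + 1 < d := by omega
    refine (ih ⟨p.val + n + 1, hr⟩ ?_ ?_ rfl).trans (h _ q ?_ le_rfl hn)
    · rw [Fin.lt_def]; dsimp only; omega
    · intro i j hi hj
      refine h i j hi ?_
      rw [Fin.le_def] at *
      dsimp only at *
      omega
    · rw [Fin.le_def]; dsimp only; omega

/-- Any `(ᾱ,β̄)`-`k`-fair ranking `σ` minimizing Kendall tau distance to `π` orders both its
top-`k` prefix and its remaining suffix according to the order of appearance in `π`. -/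
theorem optimal_kfair_orders_prefix_suffix {d g : ℕ} (π : Equiv.Perm (Fin d))
    (G : Fin g → Finset (Fin d)) (hpart : ∀ a : Fin d, ∃! i : Fin g, a ∈ G i)
    (α β : Fin g → ℝ) (hα : ∀ i, 0 ≤ α i ∧ α i ≤ 1) (hβ : ∀ i, 0 ≤ β i ∧ β i ≤ 1)
    (k : ℕ) (hk : 1 ≤ k ∧ k ≤ d)
    (σ : Equiv.Perm (Fin d)) (hfair : KFair σ G α β k)
    (hopt : ∀ σ' : Equiv.Perm (Fin d), KFair σ' G α β k → kendall π σ ≤ kendall π σ') :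
    (∀ p q : Fin d, p < q → q.val < k → π.symm (σ p) < π.symm (σ q)) ∧
    (∀ p q : Fin d, k ≤ p.val → p < q → π.symm (σ p) < π.symm (σ q)) := by
  have hadj : ∀ i j : Fin d, j.val = i.val + 1 → (i.val < k ↔ j.val < k) →
      π.symm (σ i) < π.symm (σ j) := by
    intro i j hij hside
    by_contra hnot
    have hne : π.symm (σ j) ≠ π.symm (σ i) := fun he => by
      have := σ.injective (π.symm.injective he)
      rw [Fin.ext_iff] at this
      omega
    have hlt := lt_of_le_of_ne (not_lt.mp hnot) hne
    have hfair' : KFair (σ * Equiv.swap i j) G α β k := fun t => by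
      rw [prefCount_mul_swap σ (G t) k i j hside]
      exact hfair t
    exact absurd (kendall_mul_swap_lt π σ i j hij hlt) (not_lt.mpr (hopt _ hfair'))
  constructor
  · intro p q hpq hq
    refine lt_of_consecutive_lt (fun i => π.symm (σ i)) p q hpq fun i j _ hj hij => ?_
    rw [Fin.le_def] at hj
    exact hadj i j hij (by omega)
  · intro p q hp hpq
    refine lt_of_consecutive_lt (fun i => π.symm (σ i)) p q hpq fun i j hi _ hij => ?_
    rw [Fin.le_def] at hi
    exact hadj i j hij (by omega)
end

section
/- Let π be a ranking of [d], let G₁,…,G_g be a partition of [d], ᾱ, β̄ ∈ [0,1]^g, k ∈ [d], and suppose at least one (ᾱ,β̄)-k-fair ranking exists. Call a set P ⊆ [d] valid if |P| = k and ⌊α_i·k⌋ ≤ |P ∩ G_i| ≤ ⌈β_i·k⌉ for every i ∈ [g]. Then the minimum of K(π,σ) over all (ᾱ,β̄)-k-fair rankings σ equals the minimum of K(π,σ_P) over all valid sets P, where σ_P is the ranking that lists the elements of P in the first k positions in the order they appear in π, followed by the elements of [d]∖P in the order they appear in π. -/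
/-- The ranking `σ_P` that lists the elements of `P` first, in their order of appearance in
`π`, followed by the elements of the complement of `P`, again in their order of appearance
in `π`. It is obtained by sorting the positions of `π` by the key that gives position `i`
the key `i` if `π i ∈ P` and the key `d + i` otherwise. -/
def sigmaP {d : ℕ} (π : Equiv.Perm (Fin d)) (P : Finset (Fin d)) : Equiv.Perm (Fin d) :=
  (Tuple.sort (fun i : Fin d => (if π i ∈ P then 0 else d) + i.val)).trans π

/-- `σ_P` orders the candidates by their keys. -/
theorem sigmaP_lt_iff {d : ℕ} (π : Equiv.Perm (Fin d)) (P : Finset (Fin d)) (a b : Fin d) :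
    (sigmaP π P).symm a < (sigmaP π P).symm b ↔
      (if a ∈ P then 0 else d) + (π.symm a).val < (if b ∈ P then 0 else d) + (π.symm b).val := by
  set f : Fin d → ℕ := fun i => (if π i ∈ P then 0 else d) + i.val with hf
  have hinj : Function.Injective f := by
    intro i j hij
    have hi := i.isLt
    have hj := j.isLt
    simp only [hf] at hij
    ext
    split_ifs at hij <;> omega
  have hmono : StrictMono (f ∘ Tuple.sort f) :=
    (Tuple.monotone_sort f).strictMono_of_injective (hinj.comp (Tuple.sort f).injective)
  have h := hmono.lt_iff_lt (a := (sigmaP π P).symm a) (b := (sigmaP π P).symm b)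
  have key : ∀ c, (f ∘ Tuple.sort f) ((sigmaP π P).symm c) =
      (if c ∈ P then 0 else d) + (π.symm c).val := by
    intro c
    have hc : Tuple.sort f ((sigmaP π P).symm c) = π.symm c := by
      rw [Equiv.eq_symm_apply]
      exact (sigmaP π P).apply_symm_apply c
    rw [Function.comp_apply, hc]
    simp [hf]
  rw [key, key] at h
  exact h.symm

/-- The elements of `P` occupy exactly the first `|P|` positions of `σ_P`. -/
theorem sigmaP_mem_iff {d : ℕ} (π : Equiv.Perm (Fin d)) (P : Finset (Fin d)) (i : Fin d) :
    sigmaP π P i ∈ P ↔ i.val < P.card := by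
  -- The set `S` of positions holding elements of `P` is a lower set with `|P|` elements.
  set S : Finset (Fin d) := P.map (sigmaP π P).symm.toEmbedding with hS
  have hcard : S.card = P.card := Finset.card_map _
  have hmem : ∀ j, j ∈ S ↔ sigmaP π P j ∈ P := by
    intro j
    simp [hS]
  have hlow : ∀ j l, j < l → l ∈ S → j ∈ S := by
    intro j l hjl hl
    rw [hmem] at hl ⊢
    by_contra hj
    have h := (sigmaP_lt_iff π P (sigmaP π P j) (sigmaP π P l)).1 (by simpa using hjl)
    rw [if_neg hj, if_pos hl] at h
    have := (π.symm (sigmaP π P l)).isLt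
    omega
  rw [← hmem, ← hcard]
  constructor
  · intro hi
    have hsub : Finset.Iic i ⊆ S := by
      intro j hj
      rcases (Finset.mem_Iic.1 hj).lt_or_eq with h | h
      · exact hlow j i h hi
      · exact h ▸ hi
    have := Finset.card_le_card hsub
    rw [Fin.card_Iic] at this
    omega
  · intro hi
    by_contra hni
    have hsub : S ⊆ Finset.Iio i := by
      intro j hj
      rw [Finset.mem_Iio]
      by_contra hji
      rcases (not_lt.1 hji).lt_or_eq with h | h
      · exact hni (hlow i j h hj)
      · exact hni (h ▸ hj)
    have := Finset.card_le_card hsub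
    rw [Fin.card_Iio] at this
    omega

/-- If `P` is the top-`ℓ` prefix of `σ`, then `prefCount` counts the elements of `P ∩ G`. -/
theorem prefCount_eq_card_inter {d : ℕ} (σ : Equiv.Perm (Fin d)) (P G : Finset (Fin d)) (ℓ : ℕ)
    (h : ∀ i, σ i ∈ P ↔ i.val < ℓ) : prefCount σ G ℓ = (P ∩ G).card := by
  unfold prefCount
  rw [← Finset.card_map σ.toEmbedding]
  congr 1
  ext a
  simp only [Finset.mem_map_equiv, Finset.mem_filter, Finset.mem_univ, true_and, Finset.mem_inter,
    ← h, Equiv.apply_symm_apply]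

/-- Reordering the top-`k` prefix `P` of `σ` and its complement as in `π` does not increase the
distance to `π`. -/
theorem kendall_sigmaP_le {d : ℕ} (π σ : Equiv.Perm (Fin d)) (P : Finset (Fin d)) (k : ℕ)
    (h : ∀ i, σ i ∈ P ↔ i.val < k) : kendall π (sigmaP π P) ≤ kendall π σ := by
  apply Finset.card_le_card
  rintro ⟨a, b⟩ hab
  simp only [Finset.mem_filter, Finset.mem_univ, true_and, sigmaP_lt_iff] at hab ⊢
  obtain ⟨h₁, h₂⟩ := hab
  refine ⟨h₁, ?_⟩
  have ha := h (σ.symm a)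
  have hb := h (σ.symm b)
  rw [Equiv.apply_symm_apply] at ha hb
  have hbd := (π.symm b).isLt
  have had := (π.symm a).isLt
  rw [Fin.lt_def] at h₁ ⊢
  split_ifs at h₂ with hbP haP haP
  · omega
  · have := hb.1 hbP
    have := mt ha.2 haP
    omega
  · omega
  · omega

/-- The minimum Kendall tau distance from `π` to an `(ᾱ,β̄)`-`k`-fair ranking equals the
minimum of `K(π, σ_P)` over all valid sets `P` (sets of size `k` whose intersection with
each group `Gᵢ` has size between `⌊αᵢ·k⌋` and `⌈βᵢ·k⌉`). -/
theorem closest_kfair_eq_min_over_valid_sets {d g : ℕ} (π : Equiv.Perm (Fin d))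
    (G : Fin g → Finset (Fin d)) (hpart : ∀ a : Fin d, ∃! i : Fin g, a ∈ G i)
    (α β : Fin g → ℝ) (hα : ∀ i, 0 ≤ α i ∧ α i ≤ 1) (hβ : ∀ i, 0 ≤ β i ∧ β i ≤ 1)
    (k : ℕ) (hk : 1 ≤ k ∧ k ≤ d)
    (hex : ∃ σ : Equiv.Perm (Fin d), KFair σ G α β k) :
    sInf {n : ℕ | ∃ σ : Equiv.Perm (Fin d), KFair σ G α β k ∧ kendall π σ = n} =
      sInf {n : ℕ | ∃ P : Finset (Fin d),
        (P.card = k ∧ ∀ i : Fin g,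
          ⌊α i * (k : ℝ)⌋₊ ≤ (P ∩ G i).card ∧ (P ∩ G i).card ≤ ⌈β i * (k : ℝ)⌉₊) ∧
        kendall π (sigmaP π P) = n} := by
  have hval : ∀ σ : Equiv.Perm (Fin d), KFair σ G α β k → ∃ P : Finset (Fin d),
      (P.card = k ∧ ∀ i : Fin g,
        ⌊α i * (k : ℝ)⌋₊ ≤ (P ∩ G i).card ∧ (P ∩ G i).card ≤ ⌈β i * (k : ℝ)⌉₊) ∧
      kendall π (sigmaP π P) ≤ kendall π σ := by
    intro σ hσ
    set P : Finset (Fin d) :=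
      (Finset.univ.filter fun i : Fin d => i.val < k).map σ.toEmbedding with hP
    have hmem : ∀ i, σ i ∈ P ↔ i.val < k := by
      intro i
      simp [hP]
    refine ⟨P, ⟨?_, fun i => ?_⟩, kendall_sigmaP_le π σ P k hmem⟩
    · rw [hP, Finset.card_map, Fin.card_filter_val_lt]
      exact min_eq_right hk.2
    · rw [← prefCount_eq_card_inter σ P (G i) k hmem]
      exact hσ i
  apply le_antisymm
  · apply csInf_le_csInf (OrderBot.bddBelow _)
    · obtain ⟨σ, hσ⟩ := hex
      obtain ⟨P, hP, -⟩ := hval σ hσ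
      exact ⟨_, P, hP, rfl⟩
    · rintro n ⟨P, ⟨hcard, hP⟩, rfl⟩
      refine ⟨sigmaP π P, fun i => ?_, rfl⟩
      rw [prefCount_eq_card_inter _ P (G i) k fun j => hcard ▸ sigmaP_mem_iff π P j]
      exact hP i
  · apply le_csInf
    · obtain ⟨σ, hσ⟩ := hex
      exact ⟨_, σ, hσ, rfl⟩
    · rintro n ⟨σ, hσ, rfl⟩
      obtain ⟨P, hP, hle⟩ := hval σ hσ
      exact le_trans (Nat.sInf_le ⟨P, hP, rfl⟩) hle
end

section
/- Let π be a ranking of [d] and k ∈ [d]. For a set P ⊆ [d] with |P| = k, let σ_P be the ranking that lists the elements of P in the first k positions in the order they appear in π, followed by the elements of [d]∖P in the order they appear in π. If b ∈ P and a ∉ P satisfy a <_π b, and P' = (P∖{b}) ∪ {a}, then K(π, σ_{P'}) < K(π, σ_P). -/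
/-- Sorting along an injective key places `i` before `j` exactly when the key of `i` is smaller. -/
lemma sort_symm_lt_iff {n : ℕ} {f : Fin n → ℕ} (hf : Function.Injective f) (i j : Fin n) :
    (Tuple.sort f).symm i < (Tuple.sort f).symm j ↔ f i < f j := by
  have hs : StrictMono (f ∘ Tuple.sort f) :=
    (Tuple.monotone_sort f).strictMono_of_injective (hf.comp (Tuple.sort f).injective)
  rw [← hs.lt_iff_lt]
  simp

lemma sigmaP_key_injective {d : ℕ} (π : Equiv.Perm (Fin d)) (P : Finset (Fin d)) :
    Function.Injective (fun i : Fin d => (if π i ∈ P then 0 else d) + i.val) := by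
  intro i j h
  have hi := i.isLt
  have hj := j.isLt
  apply Fin.ext
  dsimp only at h
  split_ifs at h <;> omega

lemma kendall_sigmaP {d : ℕ} (π : Equiv.Perm (Fin d)) (P : Finset (Fin d)) :
    kendall π (sigmaP π P) = (Finset.univ.filter fun p : Fin d × Fin d =>
      π.symm p.1 < π.symm p.2 ∧ p.1 ∉ P ∧ p.2 ∈ P).card := by
  unfold kendall
  congr 1
  ext ⟨x, y⟩
  simp only [Finset.mem_filter, Finset.mem_univ, true_and, and_congr_right_iff]
  intro hxy
  simp only [sigmaP, Equiv.symm_trans_apply]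
  rw [sort_symm_lt_iff (sigmaP_key_injective π P)]
  simp only [Equiv.apply_symm_apply]
  have hx := (π.symm x).isLt
  have hy := (π.symm y).isLt
  rw [Fin.lt_def] at hxy
  split_ifs with h1 h2 h2 <;> simp only [h1, h2] <;> simp <;> omega

lemma mem_insert_erase_iff_swap {α : Type*} [DecidableEq α] {P : Finset α} {a b : α}
    (hb : b ∈ P) (ha : a ∉ P) (x : α) :
    x ∈ insert a (P.erase b) ↔ Equiv.swap a b x ∈ P := by
  rw [Equiv.swap_apply_def]
  split_ifs <;> grind

/-- If `b ∈ P`, `a ∉ P` and `a` appears before `b` in `π`, then replacing `b` by `a` in `P`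
strictly decreases the Kendall tau distance of `σ_P` from `π`. -/
theorem swap_in_topset_decreases_kendall {d : ℕ} (π : Equiv.Perm (Fin d)) (k : ℕ)
    (P : Finset (Fin d)) (hP : P.card = k) (a b : Fin d) (hb : b ∈ P) (ha : a ∉ P)
    (hab : π.symm a < π.symm b) :
    kendall π (sigmaP π (insert a (P.erase b))) < kendall π (sigmaP π P) := by
  rw [kendall_sigmaP, kendall_sigmaP,
    ← Finset.card_map ((Equiv.swap a b).prodCongr (Equiv.swap a b)).toEmbedding]
  apply Finset.card_lt_card
  rw [Finset.ssubset_iff_of_subset]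
  · refine ⟨(a, b), by simp [hab, ha, hb], ?_⟩
    simp only [Finset.mem_map_equiv, Finset.mem_filter]
    simp [hab.le]
  · intro p hp
    simp only [Finset.mem_map, Finset.mem_filter, Finset.mem_univ, true_and,
      mem_insert_erase_iff_swap hb ha] at hp ⊢
    obtain ⟨⟨x, y⟩, ⟨hxy, hx, hy⟩, rfl⟩ := hp
    refine ⟨?_, hx, hy⟩
    have hxa : x ≠ a := by rintro rfl; simp [hb] at hx
    have hyb : y ≠ b := by rintro rfl; simp [ha] at hy
    -- `τ` moves the first entry weakly earlier and the second weakly later.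
    have h1 : π.symm (Equiv.swap a b x) ≤ π.symm x := by
      by_cases h : x = b
      · simpa [h] using hab.le
      · rw [Equiv.swap_apply_of_ne_of_ne hxa h]
    have h2 : π.symm y ≤ π.symm (Equiv.swap a b y) := by
      by_cases h : y = a
      · simpa [h] using hab.le
      · rw [Equiv.swap_apply_of_ne_of_ne h hyb]
    exact (h1.trans_lt hxy).trans_le h2
end

section
/- Let (X,ρ) be a metric space, S ⊆ X a finite nonempty set, F ⊆ X, and c ≥ 1 a real number. Let σ* ∈ F, let π̄ ∈ S be a nearest neighbor of σ* in S (i.e., ρ(π̄,σ*) ≤ ρ(π,σ*) for all π ∈ S), and let σ̄ ∈ F satisfy ρ(π̄,σ̄) ≤ c·ρ(π̄,f) for every f ∈ F (a c-approximate closest point of F to π̄). Then for every π ∈ S, ρ(π, σ̄) ≤ (c+2)·ρ(π, σ*). -/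
/-- If `σ*` is a point of `F`, `π̄` is a nearest neighbor of `σ*` in `S`, and `σ̄` is a
`c`-approximate closest point of `F` to `π̄`, then `σ̄` is within distance `(c+2)·ρ(π,σ*)`
of every `π ∈ S`. -/
theorem approx_closest_fair_pointwise {X : Type*} [MetricSpace X]
    (S : Finset X) (hS : S.Nonempty) (F : Set X) (c : ℝ) (hc : 1 ≤ c)
    (σs : X) (hσs : σs ∈ F)
    (πb : X) (hπb : πb ∈ S) (hnear : ∀ π ∈ S, dist πb σs ≤ dist π σs)
    (σb : X) (hσb : σb ∈ F) (happrox : ∀ f ∈ F, dist πb σb ≤ c * dist πb f) :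
    ∀ π ∈ S, dist π σb ≤ (c + 2) * dist π σs := by
  intro π hπ
  -- Go from `π` to `σb` through `σs` and `πb`: the three legs cost at most `1`, `1` and `c`
  -- times `dist π σs`.
  have htri : dist π σb ≤ dist π σs + dist σs πb + dist πb σb := dist_triangle4 _ _ _ _
  rw [dist_comm σs πb] at htri
  have hn := hnear π hπ
  have hmul : c * dist πb σs ≤ c * dist π σs := by gcongr
  linarith [happrox σs hσs]
end

section
/- Let (X,ρ) be a metric space, S ⊆ X a finite nonempty set, F ⊆ X a finite nonempty set, c ≥ 1 and q ≥ 1 real numbers. Suppose that for each π ∈ S there is a chosen point σ_π ∈ F with ρ(π,σ_π) ≤ c·ρ(π,f) for every f ∈ F. Define Obj_q(S,σ) = (Σ_{π'∈S} ρ(π',σ)^q)^{1/q}. Then min_{π∈S} Obj_q(S, σ_π) ≤ (c+2) · min_{f∈F} Obj_q(S, f). -/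
open Finset

/-! Let `f ∈ F` be optimal and let `π ∈ S` be a point of `S` closest to `f`. For every `π' ∈ S`,
`dist π' (σ π) ≤ dist π' f + dist f π + dist π (σ π) ≤ dist π' f + (1 + c) * dist π f`, and
`dist π f ≤ dist π' f`, so `dist π' (σ π) ≤ (c + 2) * dist π' f`. The `q`-mean objective is
monotone and homogeneous in the vector of distances, so this pointwise bound suffices. -/

/-- First meta-algorithm, `q`-mean objective: if for every `π ∈ S` the point `σ π ∈ F` is a
`c`-approximate closest point of `F` to `π`, then the best of the points `σ π` is a
`(c+2)`-approximation to the `q`-mean aggregation problem over `F`. -/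
theorem meta_algorithm_qmean {X : Type*} [MetricSpace X]
    (S F : Finset X) (hS : S.Nonempty) (hF : F.Nonempty)
    (c q : ℝ) (hc : 1 ≤ c) (hq : 1 ≤ q)
    (σ : X → X) (hmem : ∀ π ∈ S, σ π ∈ F)
    (happrox : ∀ π ∈ S, ∀ f ∈ F, dist π (σ π) ≤ c * dist π f) :
    S.inf' hS (fun π => (∑ π' ∈ S, dist π' (σ π) ^ q) ^ (1 / q)) ≤
      (c + 2) * F.inf' hF (fun f => (∑ π' ∈ S, dist π' f ^ q) ^ (1 / q)) := by
  obtain ⟨f, hfF, hf⟩ := F.exists_mem_eq_inf' hF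
    (fun f => (∑ π' ∈ S, dist π' f ^ q) ^ (1 / q))
  rw [hf]
  obtain ⟨π, hπ, hmin⟩ := S.exists_min_image (fun π => dist π f) hS
  refine (Finset.inf'_le _ hπ).trans ?_
  have hq0 : 0 < q := by linarith
  have hc0 : 0 ≤ c + 2 := by linarith
  have hpt : ∀ π' ∈ S, dist π' (σ π) ≤ (c + 2) * dist π' f := by
    intro π' hπ'
    calc dist π' (σ π) ≤ dist π' f + dist f π + dist π (σ π) := dist_triangle4 _ _ _ _
      _ ≤ dist π' f + dist π f + c * dist π f := by
          rw [dist_comm f π]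
          gcongr
          exact happrox π hπ f hfF
      _ ≤ dist π' f + dist π' f + c * dist π' f := by
          gcongr <;> exact hmin π' hπ'
      _ = (c + 2) * dist π' f := by ring
  have hsum0 : 0 ≤ ∑ π' ∈ S, dist π' f ^ q :=
    Finset.sum_nonneg fun _ _ => Real.rpow_nonneg dist_nonneg _
  calc (∑ π' ∈ S, dist π' (σ π) ^ q) ^ (1 / q)
      ≤ (∑ π' ∈ S, ((c + 2) * dist π' f) ^ q) ^ (1 / q) := by
        refine Real.rpow_le_rpow
          (Finset.sum_nonneg fun _ _ => Real.rpow_nonneg dist_nonneg _)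
          (Finset.sum_le_sum fun π' hπ' => ?_) (by positivity)
        exact Real.rpow_le_rpow dist_nonneg (hpt π' hπ') hq0.le
    _ = ((c + 2) ^ q * ∑ π' ∈ S, dist π' f ^ q) ^ (1 / q) := by
        simp_rw [Real.mul_rpow hc0 dist_nonneg, ← Finset.mul_sum]
    _ = (c + 2) * (∑ π' ∈ S, dist π' f ^ q) ^ (1 / q) := by
        rw [Real.mul_rpow (Real.rpow_nonneg hc0 _) hsum0, one_div,
          Real.rpow_rpow_inv hc0 hq0.ne']
end

section
/- Let (X,ρ) be a metric space, S ⊆ X a finite nonempty set, F ⊆ X a finite nonempty set, and c ≥ 1 a real number. Suppose that for each π ∈ S there is a chosen point σ_π ∈ F with ρ(π,σ_π) ≤ c·ρ(π,f) for every f ∈ F. Then min_{π∈S} max_{π'∈S} ρ(π', σ_π) ≤ (c+2) · min_{f∈F} max_{π'∈S} ρ(π', f). In particular, the meta-algorithm gives a (c+2)-approximation for the fair center ranking problem. -/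
/-!
Let `f` be an optimal center in `F`, with value `OPT`. Every single candidate `σ π` is already
good enough: for `x ∈ S`, the triangle inequality along `x, f, π, σ π` gives
`dist x (σ π) ≤ dist x f + dist f π + c * dist π f ≤ (c + 2) * OPT`.
-/

open Finset

/-- First meta-algorithm, center objective: if for every `π ∈ S` the point `σ π ∈ F` is a
`c`-approximate closest point of `F` to `π`, then the best of the points `σ π` is a
`(c+2)`-approximation to the center problem over `F`. -/
theorem meta_algorithm_center {X : Type*} [MetricSpace X]
    (S F : Finset X) (hS : S.Nonempty) (hF : F.Nonempty)
    (c : ℝ) (hc : 1 ≤ c)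
    (σ : X → X) (hmem : ∀ π ∈ S, σ π ∈ F)
    (happrox : ∀ π ∈ S, ∀ f ∈ F, dist π (σ π) ≤ c * dist π f) :
    S.inf' hS (fun π => S.sup' hS (fun π' => dist π' (σ π))) ≤
      (c + 2) * F.inf' hF (fun f => S.sup' hS (fun π' => dist π' f)) := by
  obtain ⟨f, hf, hfeq⟩ := F.exists_mem_eq_inf' hF (fun f => S.sup' hS (fun π' => dist π' f))
  obtain ⟨π, hπ⟩ := hS
  rw [hfeq]
  have hle : ∀ x ∈ S, dist x f ≤ S.sup' ⟨π, hπ⟩ (fun π' => dist π' f) :=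
    fun x hx => Finset.le_sup' (fun π' => dist π' f) hx
  refine (Finset.inf'_le _ hπ).trans (Finset.sup'_le _ _ fun x hx => ?_)
  calc dist x (σ π) ≤ dist x f + dist f π + dist π (σ π) := dist_triangle4 _ _ _ _
    _ ≤ dist x f + dist π f + c * dist π f := by
        rw [dist_comm f π]
        gcongr
        exact happrox π hπ f hf
    _ ≤ (c + 2) * S.sup' ⟨π, hπ⟩ (fun π' => dist π' f) := by
        have h1 := hle x hx
        have h2 := hle π hπ
        have h3 := mul_le_mul_of_nonneg_left h2 (zero_le_one.trans hc)
        linarith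
end

section
/- Let (X,ρ) be a metric space and let π, π*, σ*, σ̄ ∈ X and c₁, c₂ ≥ 1 be such that ρ(π, π*) ≤ c₁·ρ(π, σ*) and ρ(π*, σ̄) ≤ c₂·ρ(π*, σ*). Then ρ(π, σ̄) ≤ (c₁c₂ + c₁ + c₂)·ρ(π, σ*). -/
/-- Second meta-algorithm, pointwise bound: if `ρ(π,π*) ≤ c₁·ρ(π,σ*)` and
`ρ(π*,σ̄) ≤ c₂·ρ(π*,σ*)`, then `ρ(π,σ̄) ≤ (c₁c₂+c₁+c₂)·ρ(π,σ*)`. -/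
theorem second_meta_pointwise {X : Type*} [MetricSpace X]
    (π πs σs σb : X) (c₁ c₂ : ℝ) (hc₁ : 1 ≤ c₁) (hc₂ : 1 ≤ c₂)
    (h₁ : dist π πs ≤ c₁ * dist π σs) (h₂ : dist πs σb ≤ c₂ * dist πs σs) :
    dist π σb ≤ (c₁ * c₂ + c₁ + c₂) * dist π σs := by
  have h₃ : dist πs σs ≤ (c₁ + 1) * dist π σs := by
    linarith [dist_triangle_left πs σs π]
  calc dist π σb ≤ dist π πs + dist πs σb := dist_triangle _ _ _
    _ ≤ c₁ * dist π σs + c₂ * ((c₁ + 1) * dist π σs) := by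
        have := mul_le_mul_of_nonneg_left h₃ (zero_le_one.trans hc₂)
        linarith
    _ = (c₁ * c₂ + c₁ + c₂) * dist π σs := by ring
end

section
/- Let (X,ρ) be a metric space, S ⊆ X a finite nonempty set, F ⊆ X a finite nonempty set, c₁, c₂ ≥ 1 and q ≥ 1 real numbers. Define Obj_q(S,σ) = (Σ_{π∈S} ρ(π,σ)^q)^{1/q}. Suppose π* ∈ X satisfies Obj_q(S,π*) ≤ c₁·Obj_q(S,x) for every x ∈ X, and σ̄ ∈ F satisfies ρ(π*,σ̄) ≤ c₂·ρ(π*,f) for every f ∈ F. Then Obj_q(S,σ̄) ≤ (c₁c₂ + c₁ + c₂) · min_{f∈F} Obj_q(S,f). -/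
/-!
For every `π ∈ S` and `f ∈ F`, the triangle inequality through `π*`, the closeness of `σ̄` to `π*`
and the triangle inequality through `π` give
`ρ(π, σ̄) ≤ ρ(π, π*) + c₂ ρ(π*, f) ≤ (1 + c₂) ρ(π, π*) + c₂ ρ(π, f)`.
Taking `ℓ^q` norms over `S` (Minkowski, `lp_le_of_le_combination`) yields
`Obj(σ̄) ≤ (1 + c₂) Obj(π*) + c₂ Obj(f)`, and `Obj(π*) ≤ c₁ Obj(f)` gives the constant
`(1 + c₂) c₁ + c₂ = c₁c₂ + c₁ + c₂`.
-/

/-- Homogeneity of the `ℓ^q` norm of a nonnegative family. -/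
lemma lp_smul {ι : Type*} (S : Finset ι) (q : ℝ) (hq : 1 ≤ q) (a : ℝ) (ha : 0 ≤ a)
    (u : ι → ℝ) (hu : ∀ i, 0 ≤ u i) :
    (∑ i ∈ S, (a * u i) ^ q) ^ (1 / q) = a * (∑ i ∈ S, u i ^ q) ^ (1 / q) := by
  have hsum : ∑ i ∈ S, (a * u i) ^ q = a ^ q * ∑ i ∈ S, u i ^ q := by
    rw [Finset.mul_sum]
    exact Finset.sum_congr rfl fun i _ => Real.mul_rpow ha (hu i)
  rw [hsum, Real.mul_rpow (Real.rpow_nonneg ha q)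
    (Finset.sum_nonneg fun i _ => Real.rpow_nonneg (hu i) q), ← Real.rpow_mul ha,
    mul_one_div_cancel (by linarith), Real.rpow_one]

/-- Monotonicity of the `ℓ^q` norm combined with Minkowski's inequality and homogeneity. -/
lemma lp_le_of_le_combination {ι : Type*} (S : Finset ι) (q : ℝ) (hq : 1 ≤ q)
    (a b : ℝ) (ha : 0 ≤ a) (hb : 0 ≤ b) (u v w : ι → ℝ)
    (hu : ∀ i, 0 ≤ u i) (hv : ∀ i, 0 ≤ v i) (hw : ∀ i, 0 ≤ w i)
    (h : ∀ i ∈ S, w i ≤ a * u i + b * v i) :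
    (∑ i ∈ S, w i ^ q) ^ (1 / q) ≤
      a * (∑ i ∈ S, u i ^ q) ^ (1 / q) + b * (∑ i ∈ S, v i ^ q) ^ (1 / q) := by
  have hq0 : 0 ≤ q := by linarith
  calc (∑ i ∈ S, w i ^ q) ^ (1 / q)
      ≤ (∑ i ∈ S, (a * u i + b * v i) ^ q) ^ (1 / q) :=
        Real.rpow_le_rpow (Finset.sum_nonneg fun i _ => Real.rpow_nonneg (hw i) q)
          (Finset.sum_le_sum fun i hi => Real.rpow_le_rpow (hw i) (h i hi) hq0) (by positivity)
    _ ≤ (∑ i ∈ S, (a * u i) ^ q) ^ (1 / q) + (∑ i ∈ S, (b * v i) ^ q) ^ (1 / q) :=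
        Real.Lp_add_le_of_nonneg S hq (fun i _ => mul_nonneg ha (hu i))
          (fun i _ => mul_nonneg hb (hv i))
    _ = _ := by rw [lp_smul S q hq a ha u hu, lp_smul S q hq b hb v hv]

open Finset

/-- Second meta-algorithm, `q`-mean objective: if `π*` is a `c₁`-approximate unconstrained
`q`-mean aggregate of `S` and `σ̄ ∈ F` is a `c₂`-approximate closest point of `F` to `π*`,
then `σ̄` is a `(c₁c₂+c₁+c₂)`-approximation to the `q`-mean aggregation problem over `F`. -/
theorem second_meta_algorithm_qmean {X : Type*} [MetricSpace X]
    (S F : Finset X) (hS : S.Nonempty) (hF : F.Nonempty)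
    (c₁ c₂ q : ℝ) (hc₁ : 1 ≤ c₁) (hc₂ : 1 ≤ c₂) (hq : 1 ≤ q)
    (πs : X)
    (hπs : ∀ x : X, (∑ π ∈ S, dist π πs ^ q) ^ (1 / q) ≤ c₁ * (∑ π ∈ S, dist π x ^ q) ^ (1 / q))
    (σb : X) (hσb : σb ∈ F) (happrox : ∀ f ∈ F, dist πs σb ≤ c₂ * dist πs f) :
    (∑ π ∈ S, dist π σb ^ q) ^ (1 / q) ≤
      (c₁ * c₂ + c₁ + c₂) * F.inf' hF (fun f => (∑ π ∈ S, dist π f ^ q) ^ (1 / q)) := by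
  obtain ⟨f, hf, hmin⟩ :=
    F.exists_mem_eq_inf' hF (fun f => (∑ π ∈ S, dist π f ^ q) ^ (1 / q))
  rw [hmin]
  have hmink := lp_le_of_le_combination S q hq (1 + c₂) c₂ (by linarith) (by linarith)
    (fun π => dist π πs) (fun π => dist π f) (fun π => dist π σb)
    (fun _ => dist_nonneg) (fun _ => dist_nonneg) (fun _ => dist_nonneg) (fun π _ => by
      have h₁ := dist_triangle π πs σb
      have h₂ := happrox f hf
      have h₃ := mul_le_mul_of_nonneg_left (dist_triangle_left πs f π) (by linarith : 0 ≤ c₂)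
      linarith)
  have happ := mul_le_mul_of_nonneg_left (hπs f) (by linarith : 0 ≤ 1 + c₂)
  linarith
end

section
/- Let q ≥ 1, let S be a finite nonempty set of rankings of [d], let G₁,…,G_g be a partition of [d], ᾱ, β̄ ∈ ([0,1]∩ℚ)^g, k ∈ [d], and b a block length with α_i·b and β_i·b integers for all i, and suppose the set F of (ᾱ,β̄)-block-k-fair rankings is nonempty. For each π ∈ S let σ_π ∈ F be a ranking minimizing the Kendall tau distance K(π,·) over F. Then min_{π∈S} (Σ_{π'∈S} K(π',σ_π)^q)^{1/q} ≤ 3 · min_{f∈F} (Σ_{π'∈S} K(π',f)^q)^{1/q}; i.e., a 3-approximate solution to the q-mean block-fair rank aggregation problem under Kendall tau is attained by a closest block-fair ranking of one of the inputs. -/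
/-!
For a block-fair `f`, let `π₀` be an input closest to `f`. For every input `π'`,
`K(π', σ π₀) ≤ K(π', f) + K(f, π₀) + K(π₀, σ π₀) ≤ K(π', f) + 2 K(π₀, f) ≤ 3 K(π', f)`,
by the triangle inequality (`kendall_triangle`), symmetry (`kendall_comm`), the optimality of
`σ π₀` against `f`, and the choice of `π₀`. This bound is termwise, so it passes to the `q`-mean,
which is monotone and homogeneous.
-/

open Finset

/-- `(ᾱ,β̄)`-block-`k`-fair ranking with block length `b`. -/
def BlockFair {d g : ℕ} (σ : Equiv.Perm (Fin d)) (G : Fin g → Finset (Fin d))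
    (α β : Fin g → ℝ) (k b : ℕ) : Prop :=
  ∀ ℓ : ℕ, k ≤ ℓ → ℓ ≤ d → b ∣ ℓ → ∀ i : Fin g,
    α i * (ℓ : ℝ) ≤ (prefCount σ (G i) ℓ : ℝ) ∧ (prefCount σ (G i) ℓ : ℝ) ≤ β i * (ℓ : ℝ)

theorem kendall_comm {d : ℕ} (π₁ π₂ : Equiv.Perm (Fin d)) :
    kendall π₁ π₂ = kendall π₂ π₁ := by
  unfold kendall
  refine Finset.card_equiv (Equiv.prodComm _ _) fun p => ?_
  simp [and_comm]

/-- A pair inverted between `π₁` and `π₃` is inverted between `π₁` and `π₂` or between `π₂` and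
`π₃`, according to the order in which `π₂` lists it. -/
theorem kendall_triangle {d : ℕ} (π₁ π₂ π₃ : Equiv.Perm (Fin d)) :
    kendall π₁ π₃ ≤ kendall π₁ π₂ + kendall π₂ π₃ := by
  unfold kendall
  refine le_trans (Finset.card_le_card ?_) (Finset.card_union_le _ _)
  intro p hp
  simp only [mem_filter, mem_univ, true_and, mem_union] at hp ⊢
  obtain ⟨h₁, h₃⟩ := hp
  have hne : π₂.symm p.1 ≠ π₂.symm p.2 := fun h => by
    rw [π₂.symm.injective h] at h₁
    exact lt_irrefl _ h₁
  rcases lt_or_gt_of_ne hne with h | h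
  · exact Or.inr ⟨h, h₃⟩
  · exact Or.inl ⟨h₁, h⟩

/-- A 3-approximate solution to the `q`-mean block-fair rank aggregation problem under the
Kendall tau metric is attained among the closest block-fair rankings of the inputs: if for
each `π ∈ S` the ranking `σ π` is a closest block-fair ranking to `π`, then the best of
these has `q`-mean objective at most `3` times that of any block-fair ranking `f`. -/
theorem qmean_blockfair_aggregation_kendall {d g : ℕ} (q : ℝ) (hq : 1 ≤ q)
    (S : Finset (Equiv.Perm (Fin d))) (hS : S.Nonempty)
    (G : Fin g → Finset (Fin d)) (hpart : ∀ a : Fin d, ∃! i : Fin g, a ∈ G i)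
    (α β : Fin g → ℝ) (hα : ∀ i, 0 ≤ α i ∧ α i ≤ 1) (hβ : ∀ i, 0 ≤ β i ∧ β i ≤ 1)
    (k b : ℕ) (hk : 1 ≤ k ∧ k ≤ d)
    (hbα : ∀ i, ∃ m : ℕ, α i * (b : ℝ) = m) (hbβ : ∀ i, ∃ m : ℕ, β i * (b : ℝ) = m)
    (σ : Equiv.Perm (Fin d) → Equiv.Perm (Fin d))
    (hσfair : ∀ π ∈ S, BlockFair (σ π) G α β k b)
    (hσopt : ∀ π ∈ S, ∀ f : Equiv.Perm (Fin d), BlockFair f G α β k b →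
      kendall π (σ π) ≤ kendall π f) :
    ∀ f : Equiv.Perm (Fin d), BlockFair f G α β k b →
      S.inf' hS (fun π => (∑ π' ∈ S, (kendall π' (σ π) : ℝ) ^ q) ^ (1 / q)) ≤
        3 * (∑ π' ∈ S, (kendall π' f : ℝ) ^ q) ^ (1 / q) := by
  intro f hf
  obtain ⟨π₀, hπ₀, hmin⟩ := S.exists_min_image (fun π => kendall π f) hS
  have key : ∀ π' ∈ S, (kendall π' (σ π₀) : ℝ) ≤ 3 * (kendall π' f : ℝ) := by
    intro π' hπ'
    have h₁ := kendall_triangle π' f (σ π₀)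
    have h₂ := kendall_triangle f π₀ (σ π₀)
    have h₃ := kendall_comm f π₀
    have h₄ := hσopt π₀ hπ₀ f hf
    have h₅ : kendall π₀ f ≤ kendall π' f := hmin π' hπ'
    have h : kendall π' (σ π₀) ≤ 3 * kendall π' f := by omega
    exact_mod_cast h
  have hq0 : 0 < q := by linarith
  refine (Finset.inf'_le _ hπ₀).trans ?_
  have hsum : ∑ π' ∈ S, (kendall π' (σ π₀) : ℝ) ^ q ≤
      (3 : ℝ) ^ q * ∑ π' ∈ S, (kendall π' f : ℝ) ^ q := by
    rw [Finset.mul_sum]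
    refine Finset.sum_le_sum fun π' hπ' => ?_
    rw [← Real.mul_rpow (by norm_num) (Nat.cast_nonneg _)]
    exact Real.rpow_le_rpow (Nat.cast_nonneg _) (key π' hπ') hq0.le
  calc (∑ π' ∈ S, (kendall π' (σ π₀) : ℝ) ^ q) ^ (1 / q)
      ≤ ((3 : ℝ) ^ q * ∑ π' ∈ S, (kendall π' f : ℝ) ^ q) ^ (1 / q) :=
        Real.rpow_le_rpow (by positivity) hsum (by positivity)
    _ = 3 * (∑ π' ∈ S, (kendall π' f : ℝ) ^ q) ^ (1 / q) := by
        rw [Real.mul_rpow (by positivity) (by positivity), one_div,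
          Real.rpow_rpow_inv (by norm_num) hq0.ne']
end

section
/- Let q ≥ 1, let S be a finite nonempty set of rankings of [d], let G₁,…,G_g be a partition of [d], ᾱ, β̄ ∈ [0,1]^g, k ∈ [d], and suppose the set F of (ᾱ,β̄)-strict-k-fair rankings is nonempty. For each π ∈ S let σ_π ∈ F be a ranking minimizing the Ulam distance U(π,·) over F. Then min_{π∈S} (Σ_{π'∈S} U(π',σ_π)^q)^{1/q} ≤ 3 · min_{f∈F} (Σ_{π'∈S} U(π',f)^q)^{1/q}; i.e., a 3-approximate solution to the q-mean strict-fair rank aggregation problem under the Ulam metric is attained by a closest strict-fair ranking of one of the inputs. -/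
/-!
The Ulam distance is a metric on rankings; only symmetry and the triangle inequality matter here.
For the latter, a common subsequence `l₁` of `a, b` and a common subsequence `l₂` of `b, c` are both
subsequences of the duplicate-free sequence `b`, so the elements they share occur in the same order
in both and form a common subsequence of `a, c`. There are at least `|l₁| + |l₂| - d` of them.

Given a fair `f`, take `p ∈ S` closest to `f`. For every `π' ∈ S`,
`U(π', σ_p) ≤ U(π', f) + U(f, p) + U(p, σ_p) ≤ U(π', f) + 2 U(p, f) ≤ 3 U(π', f)`,
by optimality of `σ_p` and the choice of `p`. The bound holds term by term, so the `q`-mean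
inequality follows from monotonicity and homogeneity, without Minkowski's inequality.
-/

open Finset

/-- The sequence of candidates of the ranking `π`, i.e. `π 0, π 1, …, π (d-1)`. -/
def permList {d : ℕ} (π : Equiv.Perm (Fin d)) : List (Fin d) :=
  (List.finRange d).map π

/-- Length of a longest common subsequence of the two rankings. -/
noncomputable def lcsLen {d : ℕ} (π₁ π₂ : Equiv.Perm (Fin d)) : ℕ :=
  sSup {n : ℕ | ∃ l : List (Fin d),
    l.Sublist (permList π₁) ∧ l.Sublist (permList π₂) ∧ l.length = n}

/-- Ulam distance between two rankings of `[d]`: `d` minus the length of a longest common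
subsequence. -/
noncomputable def ulam {d : ℕ} (π₁ π₂ : Equiv.Perm (Fin d)) : ℕ := d - lcsLen π₁ π₂

/-- `(ᾱ,β̄)`-strict-`k`-fair ranking. -/
def StrictFair {d g : ℕ} (σ : Equiv.Perm (Fin d)) (G : Fin g → Finset (Fin d))
    (α β : Fin g → ℝ) (k : ℕ) : Prop :=
  ∀ ℓ : ℕ, k ≤ ℓ → ℓ ≤ d → ∀ i : Fin g,
    ⌊α i * (ℓ : ℝ)⌋₊ ≤ prefCount σ (G i) ℓ ∧ prefCount σ (G i) ℓ ≤ ⌈β i * (ℓ : ℝ)⌉₊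

lemma length_permList {d : ℕ} (π : Equiv.Perm (Fin d)) : (permList π).length = d := by
  simp [permList]

lemma nodup_permList {d : ℕ} (π : Equiv.Perm (Fin d)) : (permList π).Nodup :=
  (List.nodup_finRange d).map π.injective

lemma bddAbove_lcs {d : ℕ} (a b : Equiv.Perm (Fin d)) :
    BddAbove {n : ℕ | ∃ l : List (Fin d),
      l.Sublist (permList a) ∧ l.Sublist (permList b) ∧ l.length = n} := by
  refine ⟨d, ?_⟩
  rintro n ⟨l, h, -, rfl⟩
  simpa [length_permList] using h.length_le

/-- The supremum defining `lcsLen` is attained. -/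
lemma exists_lcs {d : ℕ} (a b : Equiv.Perm (Fin d)) :
    ∃ l : List (Fin d),
      l.Sublist (permList a) ∧ l.Sublist (permList b) ∧ l.length = lcsLen a b :=
  Nat.sSup_mem (s := {n : ℕ | ∃ l : List (Fin d),
    l.Sublist (permList a) ∧ l.Sublist (permList b) ∧ l.length = n})
    ⟨0, [], by simp, by simp, rfl⟩ (bddAbove_lcs a b)

lemma length_le_lcsLen {d : ℕ} {a b : Equiv.Perm (Fin d)} {l : List (Fin d)}
    (ha : l.Sublist (permList a)) (hb : l.Sublist (permList b)) : l.length ≤ lcsLen a b :=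
  le_csSup (bddAbove_lcs a b) ⟨l, ha, hb, rfl⟩

lemma ulam_comm {d : ℕ} (a b : Equiv.Perm (Fin d)) : ulam a b = ulam b a := by
  unfold ulam lcsLen
  simp only [and_left_comm]

/-- In a duplicate-free list, a sublist is recovered by filtering on membership. -/
lemma filter_mem_of_sublist {α : Type*} [DecidableEq α] {l m : List α} (h : l.Sublist m)
    (hm : m.Nodup) : m.filter (· ∈ l) = l := by
  induction h with
  | slnil => rfl
  | @cons l m x h ih =>
    rw [List.nodup_cons] at hm
    have hx : x ∉ l := fun hx => hm.1 (h.subset hx)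
    simpa [List.filter_cons, hx] using ih hm.2
  | @cons_cons l m x h ih =>
    rw [List.nodup_cons] at hm
    have : m.filter (· ∈ x :: l) = m.filter (· ∈ l) := by
      refine List.filter_congr fun y hy => ?_
      have : y ≠ x := fun e => hm.1 (e ▸ hy)
      simp [this]
    rw [List.filter_cons, if_pos (by simp), this, ih hm.2]

lemma ulam_triangle {d : ℕ} (a b c : Equiv.Perm (Fin d)) :
    ulam a c ≤ ulam a b + ulam b c := by
  obtain ⟨l₁, h₁a, h₁b, h₁⟩ := exists_lcs a b
  obtain ⟨l₂, h₂b, h₂c, h₂⟩ := exists_lcs b c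
  -- The shared elements appear in the same order in both lists: the order of `b`.
  have key : l₁.filter (· ∈ l₂) = l₂.filter (· ∈ l₁) := by
    rw [← filter_mem_of_sublist h₁b (nodup_permList b),
      ← filter_mem_of_sublist h₂b (nodup_permList b)]
    simp only [List.filter_filter, List.mem_filter]
    refine List.filter_congr fun y hy => ?_
    simp [hy, Bool.and_comm]
  have hle : (l₁.filter (· ∈ l₂)).length ≤ lcsLen a c :=
    length_le_lcsLen (List.filter_sublist.trans h₁a) (key ▸ List.filter_sublist.trans h₂c)
  have hcard : l₁.length + l₂.length ≤ d + (l₁.filter (· ∈ l₂)).length := by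
    have n₁ := (nodup_permList b).sublist h₁b
    have n₂ := (nodup_permList b).sublist h₂b
    have hi : (l₁.filter (· ∈ l₂)).toFinset = l₁.toFinset ∩ l₂.toFinset := by
      ext; simp
    have hu : (l₁.toFinset ∪ l₂.toFinset).card ≤ d := by
      simpa using Finset.card_le_univ (l₁.toFinset ∪ l₂.toFinset)
    have := Finset.card_union_add_card_inter l₁.toFinset l₂.toFinset
    rw [← hi, List.toFinset_card_of_nodup n₁, List.toFinset_card_of_nodup n₂,
      List.toFinset_card_of_nodup (n₁.filter _)] at this
    omega
  unfold ulam
  omega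

/-- A 3-approximate solution to the `q`-mean strict-fair rank aggregation problem under the
Ulam metric is attained among the closest strict-fair rankings of the inputs. -/
theorem qmean_strictfair_aggregation_ulam {d g : ℕ} (q : ℝ) (hq : 1 ≤ q)
    (S : Finset (Equiv.Perm (Fin d))) (hS : S.Nonempty)
    (G : Fin g → Finset (Fin d)) (hpart : ∀ a : Fin d, ∃! i : Fin g, a ∈ G i)
    (α β : Fin g → ℝ) (hα : ∀ i, 0 ≤ α i ∧ α i ≤ 1) (hβ : ∀ i, 0 ≤ β i ∧ β i ≤ 1)
    (k : ℕ) (hk : 1 ≤ k ∧ k ≤ d)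
    (σ : Equiv.Perm (Fin d) → Equiv.Perm (Fin d))
    (hσfair : ∀ π ∈ S, StrictFair (σ π) G α β k)
    (hσopt : ∀ π ∈ S, ∀ f : Equiv.Perm (Fin d), StrictFair f G α β k →
      ulam π (σ π) ≤ ulam π f) :
    ∀ f : Equiv.Perm (Fin d), StrictFair f G α β k →
      S.inf' hS (fun π => (∑ π' ∈ S, (ulam π' (σ π) : ℝ) ^ q) ^ (1 / q)) ≤
        3 * (∑ π' ∈ S, (ulam π' f : ℝ) ^ q) ^ (1 / q) := by
  intro f hf
  obtain ⟨p, hp, hmin⟩ := S.exists_min_image (fun π => ulam π f) hS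
  refine (Finset.inf'_le _ hp).trans ?_
  have hq0 : 0 < q := by linarith
  have hpt : ∀ π' ∈ S, (ulam π' (σ p) : ℝ) ≤ 3 * (ulam π' f : ℝ) := by
    intro π' hπ'
    have h1 := ulam_triangle π' f (σ p)
    have h2 := ulam_triangle f p (σ p)
    have h3 := hσopt p hp f hf
    have h4 : ulam p f ≤ ulam π' f := hmin π' hπ'
    have h5 := ulam_comm f p
    have : ulam π' (σ p) ≤ 3 * ulam π' f := by omega
    exact_mod_cast this
  calc (∑ π' ∈ S, (ulam π' (σ p) : ℝ) ^ q) ^ (1 / q)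
      ≤ (∑ π' ∈ S, (3 * (ulam π' f : ℝ)) ^ q) ^ (1 / q) := by
        gcongr with π' hπ'
        exact hpt π' hπ'
    _ = ((3 : ℝ) ^ q * ∑ π' ∈ S, (ulam π' f : ℝ) ^ q) ^ (1 / q) := by
        rw [Finset.mul_sum]
        congr 1
        refine Finset.sum_congr rfl fun π' _ => ?_
        rw [Real.mul_rpow (by norm_num) (by positivity)]
    _ = 3 * (∑ π' ∈ S, (ulam π' f : ℝ) ^ q) ^ (1 / q) := by
        rw [Real.mul_rpow (by positivity) (by positivity), one_div,
          Real.rpow_rpow_inv (by norm_num) hq0.ne']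
end

section
/- Let q ≥ 1, let S be a finite nonempty set of rankings of [d], let G₁,…,G_g be a partition of [d], ᾱ, β̄ ∈ [0,1]^g, k ∈ [d], and suppose the set F of (ᾱ,β̄)-strict-k-fair rankings is nonempty. For each π ∈ S let σ_π ∈ F be a ranking minimizing the Spearman footrule distance F(π,·) over F. Then min_{π∈S} (Σ_{π'∈S} F(π',σ_π)^q)^{1/q} ≤ 3 · min_{f∈F} (Σ_{π'∈S} F(π',f)^q)^{1/q}; i.e., a 3-approximate solution to the q-mean strict-fair rank aggregation problem under the Spearman footrule metric is attained by a closest strict-fair ranking of one of the inputs. -/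
/-! Given a fair `f`, take `π ∈ S` closest to `f`. For every `π' ∈ S`,
`F(π', σ π) ≤ F(π', f) + F(f, π) + F(π, σ π) ≤ F(π', f) + 2 F(π, f) ≤ 3 F(π', f)`:
the triangle inequality (`spearman_triangle`), then optimality of `σ π` among fair rankings, then the
choice of `π`. This pointwise bound passes to the `q`-mean by monotonicity and homogeneity. -/

open Finset

/-- Spearman footrule distance between two rankings of `[d]`:
`∑ i, |π₁(i) − π₂(i)|`. -/
def spearman {d : ℕ} (π₁ π₂ : Equiv.Perm (Fin d)) : ℕ :=
  ∑ i : Fin d, (((π₁ i).val : ℤ) - ((π₂ i).val : ℤ)).natAbs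

lemma spearman_triangle {d : ℕ} (a b c : Equiv.Perm (Fin d)) :
    spearman a c ≤ spearman a b + spearman b c := by
  unfold spearman
  rw [← Finset.sum_add_distrib]
  exact Finset.sum_le_sum fun i _ => by omega

lemma spearman_comm {d : ℕ} (a b : Equiv.Perm (Fin d)) : spearman a b = spearman b a :=
  Finset.sum_congr rfl fun i _ => by omega

/-- A 3-approximate solution to the `q`-mean strict-fair rank aggregation problem under the
Spearman footrule metric is attained among the closest strict-fair rankings of the inputs. -/
theorem qmean_strictfair_aggregation_spearman {d g : ℕ} (q : ℝ) (hq : 1 ≤ q)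
    (S : Finset (Equiv.Perm (Fin d))) (hS : S.Nonempty)
    (G : Fin g → Finset (Fin d)) (hpart : ∀ a : Fin d, ∃! i : Fin g, a ∈ G i)
    (α β : Fin g → ℝ) (hα : ∀ i, 0 ≤ α i ∧ α i ≤ 1) (hβ : ∀ i, 0 ≤ β i ∧ β i ≤ 1)
    (k : ℕ) (hk : 1 ≤ k ∧ k ≤ d)
    (σ : Equiv.Perm (Fin d) → Equiv.Perm (Fin d))
    (hσfair : ∀ π ∈ S, StrictFair (σ π) G α β k)
    (hσopt : ∀ π ∈ S, ∀ f : Equiv.Perm (Fin d), StrictFair f G α β k →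
      spearman π (σ π) ≤ spearman π f) :
    ∀ f : Equiv.Perm (Fin d), StrictFair f G α β k →
      S.inf' hS (fun π => (∑ π' ∈ S, (spearman π' (σ π) : ℝ) ^ q) ^ (1 / q)) ≤
        3 * (∑ π' ∈ S, (spearman π' f : ℝ) ^ q) ^ (1 / q) := by
  intro f hf
  obtain ⟨π, hπ, hmin⟩ := S.exists_min_image (fun π => spearman π f) hS
  refine Finset.inf'_le_of_le _ hπ ?_
  have hq0 : 0 < q := by linarith
  have key : ∀ π' ∈ S, (spearman π' (σ π) : ℝ) ≤ 3 * (spearman π' f : ℝ) := by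
    intro π' hπ'
    have h1 := spearman_triangle π' f (σ π)
    have h2 := spearman_triangle f π (σ π)
    have h3 := hσopt π hπ f hf
    have h4 := hmin π' hπ'
    rw [spearman_comm f π] at h2
    have h5 : spearman π' (σ π) ≤ 3 * spearman π' f := by omega
    exact_mod_cast h5
  calc (∑ π' ∈ S, (spearman π' (σ π) : ℝ) ^ q) ^ (1 / q)
      ≤ (∑ π' ∈ S, (3 * (spearman π' f : ℝ)) ^ q) ^ (1 / q) := by
        gcongr with π' hπ'
        exact key π' hπ'
    _ = ((3 : ℝ) ^ q * ∑ π' ∈ S, (spearman π' f : ℝ) ^ q) ^ (1 / q) := by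
        rw [Finset.mul_sum]
        congr 1
        exact Finset.sum_congr rfl fun π' _ => Real.mul_rpow (by norm_num) (Nat.cast_nonneg _)
    _ = 3 * (∑ π' ∈ S, (spearman π' f : ℝ) ^ q) ^ (1 / q) := by
        rw [Real.mul_rpow (by positivity) (by positivity), ← Real.rpow_mul (by norm_num),
          mul_one_div_cancel hq0.ne', Real.rpow_one]
end

section
/- Let S be a finite nonempty set of rankings of [d], let G₁,…,G_g be a partition of [d], ᾱ, β̄ ∈ ([0,1]∩ℚ)^g, k ∈ [d], and b a block length with α_i·b and β_i·b integers for all i, and suppose the set F of (ᾱ,β̄)-block-k-fair rankings is nonempty. For each π ∈ S let σ_π ∈ F minimize the Kendall tau distance K(π,·) over F. Then min_{π∈S} max_{π'∈S} K(π', σ_π) ≤ 3 · min_{f∈F} max_{π'∈S} K(π', f); i.e., a 3-approximate solution to the block-fair center ranking problem under Kendall tau is attained by a closest block-fair ranking of one of the inputs. -/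
/-!
For any input `π ∈ S` and any fair `f`, the triangle inequality through `f` and then `π` gives
`K(π', σ_π) ≤ K(π', f) + K(f, π) + K(π, σ_π)`. The last term is at most `K(π, f)` because `σ_π` is a
closest fair ranking to `π` and `f` is fair, so each of the three terms is bounded by the objective
value of `f`. The bound therefore holds for every choice of `π`, not just the best one.
-/

open Finset

/-- A 3-approximate solution to the block-fair center ranking problem under the Kendall tau
metric is attained among the closest block-fair rankings of the inputs. -/
theorem center_blockfair_aggregation_kendall {d g : ℕ}
    (S : Finset (Equiv.Perm (Fin d))) (hS : S.Nonempty)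
    (G : Fin g → Finset (Fin d)) (hpart : ∀ a : Fin d, ∃! i : Fin g, a ∈ G i)
    (α β : Fin g → ℝ) (hα : ∀ i, 0 ≤ α i ∧ α i ≤ 1) (hβ : ∀ i, 0 ≤ β i ∧ β i ≤ 1)
    (k b : ℕ) (hk : 1 ≤ k ∧ k ≤ d)
    (hbα : ∀ i, ∃ m : ℕ, α i * (b : ℝ) = m) (hbβ : ∀ i, ∃ m : ℕ, β i * (b : ℝ) = m)
    (σ : Equiv.Perm (Fin d) → Equiv.Perm (Fin d))
    (hσfair : ∀ π ∈ S, BlockFair (σ π) G α β k b)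
    (hσopt : ∀ π ∈ S, ∀ f : Equiv.Perm (Fin d), BlockFair f G α β k b →
      kendall π (σ π) ≤ kendall π f) :
    ∀ f : Equiv.Perm (Fin d), BlockFair f G α β k b →
      S.inf' hS (fun π => S.sup' hS (fun π' => kendall π' (σ π))) ≤
        3 * S.sup' hS (fun π' => kendall π' f) := by
  intro f hf
  have ⟨π, hπ⟩ := hS
  refine (Finset.inf'_le _ hπ).trans (Finset.sup'_le _ _ fun π' hπ' => ?_)
  have h1 := Finset.le_sup' (fun π' => kendall π' f) hπ'
  have h2 := Finset.le_sup' (fun π' => kendall π' f) hπ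
  have h3 := hσopt π hπ f hf
  have h4 := kendall_triangle π' f (σ π)
  have h5 := kendall_triangle f π (σ π)
  rw [kendall_comm f π] at h5
  omega
end

section
/- Let c, d ∈ ℕ with c ≥ 1 and let η ∈ (0, 1/(2c²)]. Let ℱ be a family of subsets of [d] such that every I ∈ ℱ has |I| ≥ d/c, and for any two distinct I, J ∈ ℱ, |I ∩ J| ≤ η·d. Then |ℱ| ≤ 2c. -/
/-!
Double counting. Let `N x` be the number of members of `F` containing `x`, let `m = |F|` and
`S = ∑ x, N x = ∑ I ∈ F, |I| ≥ m d / c`. Cauchy–Schwarz gives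
`S² ≤ d ∑ x, (N x)² = d ∑ I J, |I ∩ J| ≤ d (S + m (m - 1) η d)`.
If `m > 2c`, then `s ↦ s² - d s` is increasing on `s ≥ m d / c`, so `S` may be replaced by
`m d / c`; since `η ≤ 1 / (2c²)` this simplifies to `2 (m - c) ≤ m - 1`, contradicting `m > 2c`.
-/

/-- Cauchy–Schwarz for the function counting how many members of `F` contain a given point. -/
lemma sq_sum_card_le_card_mul_sum_inter {α : Type*} [Fintype α] [DecidableEq α]
    (F : Finset (Finset α)) :
    (∑ I ∈ F, (I.card : ℝ)) ^ 2 ≤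
      (Fintype.card α : ℝ) * ∑ I ∈ F, ∑ J ∈ F, ((I ∩ J).card : ℝ) := by
  have hcard : ∀ I : Finset α, (I.card : ℝ) = ∑ x : α, if x ∈ I then (1 : ℝ) else 0 := by
    intro I
    simp
  have h1 : ∑ I ∈ F, (I.card : ℝ) = ∑ x : α, ∑ I ∈ F, if x ∈ I then (1 : ℝ) else 0 := by
    rw [Finset.sum_comm]
    exact Finset.sum_congr rfl fun I _ => hcard I
  have h2 : ∑ I ∈ F, ∑ J ∈ F, ((I ∩ J).card : ℝ) =
      ∑ x : α, (∑ I ∈ F, if x ∈ I then (1 : ℝ) else 0) ^ 2 := by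
    simp_rw [sq, Finset.sum_mul_sum]
    symm
    rw [Finset.sum_comm]
    refine Finset.sum_congr rfl fun I _ => ?_
    rw [Finset.sum_comm]
    refine Finset.sum_congr rfl fun J _ => ?_
    rw [hcard]
    refine Finset.sum_congr rfl fun x _ => ?_
    by_cases hI : x ∈ I <;> by_cases hJ : x ∈ J <;> simp [hI, hJ]
  rw [h1, h2]
  exact sq_sum_le_card_mul_sum_sq

/-- A family of subsets of `[d]`, each of size at least `d/c`, with pairwise intersections
of size at most `η·d` for some `η ≤ 1/(2c²)`, has at most `2c` members. -/
theorem family_small_intersections_card_le (c d : ℕ) (hc : 1 ≤ c) (η : ℝ)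
    (hη0 : 0 < η) (hη : η ≤ 1 / (2 * (c : ℝ) ^ 2))
    (F : Finset (Finset (Fin d)))
    (hsize : ∀ I ∈ F, (d : ℝ) / c ≤ (I.card : ℝ))
    (hinter : ∀ I ∈ F, ∀ J ∈ F, I ≠ J → ((I ∩ J).card : ℝ) ≤ η * d) :
    F.card ≤ 2 * c := by
  rcases Nat.eq_zero_or_pos d with rfl | hd
  · have h := Finset.card_le_univ F
    simp at h
    omega
  by_contra! hm
  have hcR : (1 : ℝ) ≤ c := by exact_mod_cast hc
  have hdR : (0 : ℝ) < d := by exact_mod_cast hd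
  have hmR : 2 * (c : ℝ) + 1 ≤ F.card := by exact_mod_cast hm
  have hCS := sq_sum_card_le_card_mul_sum_inter F
  rw [Fintype.card_fin] at hCS
  have hS : (F.card : ℝ) * (d / c) ≤ ∑ I ∈ F, (I.card : ℝ) := by
    simpa using Finset.card_nsmul_le_sum F (fun I => (I.card : ℝ)) _ hsize
  have hI : ∑ I ∈ F, ∑ J ∈ F, ((I ∩ J).card : ℝ) ≤
      ∑ I ∈ F, (I.card : ℝ) + F.card * ((F.card - 1) * (η * d)) := by
    have hrow : ∀ I ∈ F, ∑ J ∈ F, ((I ∩ J).card : ℝ) ≤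
        (I.card : ℝ) + (F.card - 1) * (η * d) := by
      intro I hIF
      rw [← Finset.add_sum_erase F _ hIF, Finset.inter_self]
      have h := Finset.sum_le_card_nsmul (F.erase I) (fun J => ((I ∩ J).card : ℝ)) (η * d)
        fun J hJ => hinter I hIF J (Finset.mem_of_mem_erase hJ) (Finset.ne_of_mem_erase hJ).symm
      rw [nsmul_eq_mul, Finset.cast_card_erase_of_mem hIF] at h
      linarith
    refine (Finset.sum_le_sum hrow).trans_eq ?_
    rw [Finset.sum_add_distrib, Finset.sum_const, nsmul_eq_mul]
  generalize ∑ I ∈ F, (I.card : ℝ) = S at *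
  generalize (F.card : ℝ) = m at *
  -- With `e = d / c`, the bound on `η` reads `η d² ≤ e² / 2`, and no division remains.
  obtain ⟨e, he⟩ : ∃ e : ℝ, e = d / c := ⟨_, rfl⟩
  have hde : (d : ℝ) = c * e := by rw [he]; field_simp
  have he0 : 0 < e := by rw [he]; positivity
  rw [← he] at hS
  have hηd : η * (d : ℝ) ^ 2 ≤ e ^ 2 / 2 := by
    calc η * (d : ℝ) ^ 2 ≤ 1 / (2 * (c : ℝ) ^ 2) * (d : ℝ) ^ 2 := by gcongr
      _ = e ^ 2 / 2 := by rw [he]; field_simp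
  have hup : S ^ 2 - d * S ≤ m * (m - 1) * (e ^ 2 / 2) := by
    have h1 := hCS.trans (mul_le_mul_of_nonneg_left hI hdR.le)
    have h2 : m * (m - 1) * (η * (d : ℝ) ^ 2) ≤ m * (m - 1) * (e ^ 2 / 2) :=
      mul_le_mul_of_nonneg_left hηd (mul_nonneg (by linarith) (by linarith))
    linarith
  have hdm : (d : ℝ) ≤ m * e := by
    rw [hde]
    exact mul_le_mul_of_nonneg_right (by linarith) he0.le
  have hmono : 0 ≤ (S - m * e) * (S + m * e - d) :=
    mul_nonneg (by linarith) (by linarith)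
  have hpos : 0 < m * e ^ 2 * (m - 2 * c + 1) :=
    mul_pos (mul_pos (by linarith) (by positivity)) (by linarith)
  rw [hde] at hup hmono
  linarith
end
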